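/- arXiv:1604.03924 — 2 statements merged into one kernel-verified Lean document; each statement's English description precedes it below -/
import Mathlib

section
/- Let X be a countable data domain, A : X^n → Y an (ε,δ)-differentially private algorithm, and X = (X₁,…,X_n) ~ P^n. For δ̂ > 0, define E_i(δ̂) as the set of pairs (a, x₁^{i−1}) ∈ Y × X^{i−1} such that the marginal distribution of X_i is (3ε, δ̂)-indistinguishable from the conditional distribution of X_i given A(X) = a and X₁^{i−1} = x₁^{i−1}. Then for each i ∈ {1,…,n}, each prefix x₁^{i−1} ∈ X^{i−1} with positive probability, and every δ̂ > 0, Pr[ (A(X), x₁^{i−1}) ∈ E_i(δ̂) | X₁^{i−1} = x₁^{i−1} ] ≥ 1 − δ', where δ' = 2δ/δ̂ + 2δ/(1 − e^{−ε}). -/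
open scoped ENNReal

/-- The probability that a sample from the probability mass function `μ` lands in `S`. -/
noncomputable def prob {α : Type*} (μ : PMF α) (S : Set α) : ℝ :=
  (μ.toOuterMeasure S).toReal

/-- The independent coupling of two distributions: a pair whose components are independent
with the given marginal distributions. -/
noncomputable def indepPair {α β : Type*} (p : PMF α) (q : PMF β) : PMF (α × β) :=
  p.bind fun a => q.map fun b => (a, b)

/-- `MaxInfoLe μ b k` : the `b`-approximate max-information of the joint distribution `μ`
is at most `k` (measured in bits):  for every event `O` with `Pr[(X,Z) ∈ O] > b`,
`Pr[(X,Z) ∈ O] - b ≤ 2^k · Pr[X ⊗ Z ∈ O]`. -/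
def MaxInfoLe {α β : Type*} (μ : PMF (α × β)) (b k : ℝ) : Prop :=
  ∀ O : Set (α × β), b < prob μ O →
    prob μ O - b ≤ 2 ^ k * prob (indepPair (μ.map Prod.fst) (μ.map Prod.snd)) O

/-- The `n`-fold product (i.i.d.) distribution `P^n` on datasets of size `n`. -/
noncomputable def iidPMF {X : Type*} (P : PMF X) : (n : ℕ) → PMF (Fin n → X)
  | 0 => PMF.pure (fun i => i.elim0)
  | n + 1 => P.bind fun a => (iidPMF P n).map fun x => Fin.cons a x

/-- The joint distribution of `(X, A(X))` where `X ∼ μ` and `A` is a randomized algorithm. -/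
noncomputable def jointPMF {D Y : Type*} (μ : PMF D) (A : D → PMF Y) : PMF (D × Y) :=
  μ.bind fun x => (A x).map fun y => (x, y)
/-- Two datasets are neighboring if they differ in at most one entry. -/
def Neighbor {X : Type*} {n : ℕ} (x x' : Fin n → X) : Prop :=
  ∃ i : Fin n, ∀ j : Fin n, j ≠ i → x j = x' j

/-- `(ε,δ)`-differential privacy of a randomized algorithm `A` on datasets of size `n`. -/
def DiffPrivate {X Y : Type*} {n : ℕ} (A : (Fin n → X) → PMF Y) (ε δ : ℝ) : Prop :=
  ∀ x x' : Fin n → X, Neighbor x x' → ∀ O : Set Y,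
    prob (A x) O ≤ Real.exp ε * prob (A x') O + δ

/-- `PrefixEq i w x` : the dataset `x` agrees with `w` on all coordinates before `i`
(i.e. `x` has prefix `x₁^{i-1} = w₁^{i-1}`). -/
def PrefixEq {X : Type*} {n : ℕ} (i : Fin n) (w x : Fin n → X) : Prop :=
  ∀ j : Fin n, (j : ℕ) < (i : ℕ) → x j = w j

/-- The conditional probability `Pr[X_i ∈ O | A(X) = a, X₁^{i-1} = w₁^{i-1}]`, computed from the
joint distribution `μ` of the pair `(X, A(X))`. -/
noncomputable def condXi {X Y : Type*} {n : ℕ} (μ : PMF ((Fin n → X) × Y)) (i : Fin n)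
    (a : Y) (w : Fin n → X) (O : Set X) : ℝ :=
  prob μ {p | p.2 = a ∧ PrefixEq i w p.1 ∧ p.1 i ∈ O} /
    prob μ {p | p.2 = a ∧ PrefixEq i w p.1}

/-- `(ε,δ)`-indistinguishability of two distributions presented as set functions. -/
def IndistFn {D : Type*} (F G : Set D → ℝ) (ε δ : ℝ) : Prop :=
  ∀ O : Set D, F O ≤ Real.exp ε * G O + δ ∧ G O ≤ Real.exp ε * F O + δ

/-- The set `E_i(δ̂)` of "good" output/prefix pairs `(a, x₁^{i-1})`: those for which the marginal
distribution of `X_i` is `(3ε, δ̂)`-indistinguishable from the conditional distribution of `X_i`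
given `A(X) = a` and `X₁^{i-1} = x₁^{i-1}`. -/
def Eset {X Y : Type*} {n : ℕ} (μ : PMF ((Fin n → X) × Y)) (P : PMF X) (i : Fin n)
    (ε δhat : ℝ) : Set (Y × (Fin n → X)) :=
  {q | IndistFn (fun O => prob P O) (fun O => condXi μ i q.1 q.2 O) (3 * ε) δhat}

/-- The set `F_i` of output/prefix pairs `(a, x₁^i)` for which the likelihood ratio
`Pr[X_i = x_i | a, x₁^{i-1}] / Pr[X_i = x_i]` lies in `[e^{-6ε}, e^{6ε}]`. -/
def Fset {X Y : Type*} {n : ℕ} (μ : PMF ((Fin n → X) × Y)) (P : PMF X) (i : Fin n)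
    (ε : ℝ) : Set (Y × (Fin n → X)) :=
  {q | Real.exp (-(6 * ε)) ≤ condXi μ i q.1 q.2 {q.2 i} / (P (q.2 i)).toReal ∧
       condXi μ i q.1 q.2 {q.2 i} / (P (q.2 i)).toReal ≤ Real.exp (6 * ε)}

/-- `Z_i(a, x₁^i) = log₂( Pr[X_i = x_i | a, x₁^{i-1}] / Pr[X_i = x_i] )`. -/
noncomputable def Zi {X Y : Type*} {n : ℕ} (μ : PMF ((Fin n → X) × Y)) (P : PMF X)
    (i : Fin n) (q : Y × (Fin n → X)) : ℝ :=
  Real.logb 2 (condXi μ i q.1 q.2 {q.2 i} / (P (q.2 i)).toReal)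

/-- The set `G_i(δ̂)` of "good" tuples: `(a, x₁^{i-1}) ∈ E_i(δ̂)` and `(a, x₁^i) ∈ F_i`. -/
def Gset {X Y : Type*} {n : ℕ} (μ : PMF ((Fin n → X) × Y)) (P : PMF X) (i : Fin n)
    (ε δhat : ℝ) : Set (Y × (Fin n → X)) :=
  {q | q ∈ Eset μ P i ε δhat ∧ q ∈ Fset μ P i ε}

/-- `G_{≤ i}(δ̂)` : membership in `G_j(δ̂)` for every `j ≤ i`. -/
def GleSet {X Y : Type*} {n : ℕ} (μ : PMF ((Fin n → X) × Y)) (P : PMF X) (i : Fin n)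
    (ε δhat : ℝ) : Set (Y × (Fin n → X)) :=
  {q | ∀ j : Fin n, j ≤ i → q ∈ Gset μ P j ε δhat}

/-- `T_i(a, x₁^i)` equals `Z_i(a, x₁^i)` on the good set `G_{≤ i}(δ̂)` and `0` otherwise. -/
noncomputable def Ti {X Y : Type*} {n : ℕ} (μ : PMF ((Fin n → X) × Y)) (P : PMF X)
    (i : Fin n) (ε δhat : ℝ) : (Y × (Fin n → X)) → ℝ :=
  (GleSet μ P i ε δhat).indicator (Zi μ P i)

/-!
Given the prefix `x₁^{i-1}`, the entry `X_i` still has law `P`, and the output depends on it through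
a randomized map `X → Y` that inherits `(ε, δ)`-privacy from `A`. Averaging the privacy inequality
shows that the joint law of entry and output is `(ε, δ)`-indistinguishable from the product of its
marginals. For every output `a` whose posterior violates one of the two inequalities against the
prior by more than `δ̂`, choose a violating event `O_a`. The single event `{(x, a) | x ∈ O_a}`
then violates the inequality for the joint laws by `δ̂` times the probability of such `a`, so that
probability is at most `δ / δ̂`. The two directions together cost `2δ / δ̂`, already with `ε` in
place of `3ε`.
-/

section Prob

variable {α β : Type*}

lemma prob_nonneg (μ : PMF α) (S : Set α) : 0 ≤ prob μ S :=
  ENNReal.toReal_nonneg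

lemma toOuterMeasure_ne_top (μ : PMF α) (S : Set α) : μ.toOuterMeasure S ≠ ⊤ := by
  rw [PMF.toOuterMeasure_apply]
  exact ne_top_of_le_ne_top μ.tsum_coe_ne_top
    (ENNReal.tsum_le_tsum fun a => Set.indicator_le_self S μ a)

lemma prob_mono (μ : PMF α) {S T : Set α} (h : S ⊆ T) : prob μ S ≤ prob μ T :=
  ENNReal.toReal_mono (toOuterMeasure_ne_top μ T) (MeasureTheory.measure_mono h)

lemma prob_union_le (μ : PMF α) (S T : Set α) : prob μ (S ∪ T) ≤ prob μ S + prob μ T := by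
  unfold prob
  rw [← ENNReal.toReal_add (toOuterMeasure_ne_top μ S) (toOuterMeasure_ne_top μ T)]
  exact ENNReal.toReal_mono
    (ENNReal.add_ne_top.2 ⟨toOuterMeasure_ne_top μ S, toOuterMeasure_ne_top μ T⟩)
    (MeasureTheory.measure_union_le S T)

@[simp]
lemma prob_empty (μ : PMF α) : prob μ ∅ = 0 := by
  simp [prob]

@[simp]
lemma prob_univ (μ : PMF α) : prob μ Set.univ = 1 := by
  simp [prob, (μ.toOuterMeasure_apply_eq_one_iff _).2 (Set.subset_univ _)]

lemma prob_singleton (μ : PMF α) (a : α) : prob μ {a} = (μ a).toReal := by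
  rw [prob, PMF.toOuterMeasure_apply_singleton]

lemma prob_map (μ : PMF α) (f : α → β) (S : Set β) : prob (μ.map f) S = prob μ (f ⁻¹' S) := by
  rw [prob, prob, PMF.toOuterMeasure_map_apply]

lemma hasSum_prob (μ : PMF α) (S : Set α) :
    HasSum (S.indicator fun a => (μ a).toReal) (prob μ S) := by
  have h : ∑' a, S.indicator μ a ≠ ⊤ := by
    simpa only [← PMF.toOuterMeasure_apply] using toOuterMeasure_ne_top μ S
  have hind : (S.indicator fun a => (μ a).toReal) = fun a => (S.indicator μ a).toReal := by
    ext a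
    by_cases ha : a ∈ S <;> simp [ha]
  rw [prob, PMF.toOuterMeasure_apply, hind,
    ENNReal.tsum_toReal_eq (ENNReal.ne_top_of_tsum_ne_top h)]
  exact ENNReal.hasSum_toReal h

lemma hasSum_prob_fiber (μ : PMF α) (f : α → β) (S : Set α) :
    HasSum (fun b => prob μ (f ⁻¹' {b} ∩ S)) (prob μ S) := by
  simpa only [tsum_subtype, Set.indicator_indicator, (hasSum_prob μ _).tsum_eq] using
    (hasSum_prob μ S).tsum_fiberwise f

lemma hasSum_prob_bind (p : PMF α) (f : α → PMF β) (S : Set β) :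
    HasSum (fun a => (p a).toReal * prob (f a) S) (prob (p.bind f) S) := by
  have h : ∑' a, p a * (f a).toOuterMeasure S ≠ ⊤ := by
    simpa only [← PMF.toOuterMeasure_bind_apply] using toOuterMeasure_ne_top (p.bind f) S
  rw [prob, PMF.toOuterMeasure_bind_apply,
    ENNReal.tsum_toReal_eq (ENNReal.ne_top_of_tsum_ne_top h)]
  simpa only [prob, ENNReal.toReal_mul] using ENNReal.hasSum_toReal h

lemma prob_bind_le {p : PMF α} {f g : α → PMF β} {S : Set β} {c δ : ℝ}
    (h : ∀ a, prob (f a) S ≤ c * prob (g a) S + δ) :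
    prob (p.bind f) S ≤ c * prob (p.bind g) S + δ := by
  have hp : HasSum (fun a => (p a).toReal) 1 := by
    simpa using hasSum_prob p Set.univ
  have hg : HasSum (fun a => (p a).toReal * (c * prob (g a) S + δ))
      (c * prob (p.bind g) S + δ) := by
    simpa only [mul_add, mul_left_comm, one_mul] using
      ((hasSum_prob_bind p g S).mul_left c).add (hp.mul_right δ)
  exact hasSum_le (fun a => mul_le_mul_of_nonneg_left (h a) ENNReal.toReal_nonneg)
    (hasSum_prob_bind p f S) hg

lemma prob_jointPMF_le {p : PMF α} {f g : α → PMF β} {c δ : ℝ}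
    (h : ∀ a S, prob (f a) S ≤ c * prob (g a) S + δ) (O : Set (α × β)) :
    prob (jointPMF p f) O ≤ c * prob (jointPMF p g) O + δ :=
  prob_bind_le fun a => by simpa only [prob_map] using h a _

lemma map_snd_jointPMF (p : PMF α) (f : α → PMF β) :
    (jointPMF p f).map Prod.snd = p.bind f := by
  simp only [jointPMF, PMF.map_bind, PMF.map_comp, Function.comp_def]
  exact congrArg p.bind (funext fun a => PMF.map_id (f a))

lemma prob_indepPair_prod (p : PMF α) (q : PMF β) (S : Set α) (T : Set β) :
    prob (indepPair p q) (S ×ˢ T) = prob p S * prob q T := by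
  rw [indepPair, ← (hasSum_prob_bind p _ _).tsum_eq,
    ← ((hasSum_prob p S).mul_right (prob q T)).tsum_eq]
  refine tsum_congr fun a => ?_
  by_cases ha : a ∈ S <;> simp [prob_map, ha]

/-- The hypothesis says that `κ` is `ν` conditioned on `S`, written without division so that
`prob ν S` may vanish. -/
lemma prob_jointPMF_inter {ν κ : PMF α} {S : Set α}
    (h : ∀ T, prob ν (S ∩ T) = prob ν S * prob κ T) (A : α → PMF β) (O : Set (α × β)) :
    prob (jointPMF ν A) (Prod.fst ⁻¹' S ∩ O) = prob ν S * prob (jointPMF κ A) O := by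
  rw [jointPMF, jointPMF, ← (hasSum_prob_bind ν _ _).tsum_eq,
    ← ((hasSum_prob_bind κ _ O).mul_left (prob ν S)).tsum_eq]
  refine tsum_congr fun z => ?_
  rw [← mul_assoc, ← prob_singleton κ, ← h, prob_map, prob_map]
  by_cases hzS : z ∈ S
  · simp [hzS, prob_singleton, Set.preimage_inter, Set.preimage_preimage]
  · simp [hzS, Set.preimage_inter, Set.preimage_preimage]

end Prob

section ConditionalLaw

variable {X Y : Type*}

/-- `K` is a version of the conditional law of the first component of `μ` given the second.
The values `K a` at outputs `a` of probability zero are unconstrained. -/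
def IsCondLaw (μ : PMF (X × Y)) (K : Y → Set X → ℝ) : Prop :=
  ∀ a O, prob μ {p | p.2 = a} * K a O = prob μ {p | p.2 = a ∧ p.1 ∈ O}

/-- The conditional probability `Pr[x ∈ O | y = a]` for `(x, y) ∼ μ`, with value `0` if
`Pr[y = a] = 0`. -/
noncomputable def posterior (μ : PMF (X × Y)) (a : Y) (O : Set X) : ℝ :=
  prob μ {p | p.2 = a ∧ p.1 ∈ O} / prob μ {p | p.2 = a}

lemma isCondLaw_posterior (μ : PMF (X × Y)) : IsCondLaw μ (posterior μ) := fun _ _ =>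
  mul_div_cancel_of_imp' fun h =>
    le_antisymm (h ▸ prob_mono μ fun _ hp => hp.1) (prob_nonneg μ _)

lemma isCondLaw_indepPair (p : PMF X) (q : PMF Y) :
    IsCondLaw (indepPair p q) fun _ O => prob p O := by
  intro a O
  have hmarg : {z : X × Y | z.2 = a} = Set.univ ×ˢ {a} := by ext; simp
  have hjoint : {z : X × Y | z.2 = a ∧ z.1 ∈ O} = O ×ˢ {a} := by ext; simp [and_comm]
  rw [hmarg, hjoint, prob_indepPair_prod, prob_indepPair_prod, prob_univ, one_mul, mul_comm]

lemma IsCondLaw.mul_prob_exists_lt_le {μ ν : PMF (X × Y)} {M : PMF Y} {K L : Y → Set X → ℝ}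
    (hK : IsCondLaw μ K) (hL : IsCondLaw ν L)
    (hμ : μ.map Prod.snd = M) (hν : ν.map Prod.snd = M) {c δ : ℝ}
    (h : ∀ E, prob μ E ≤ c * prob ν E + δ) (t : ℝ) :
    t * prob M {a | ∃ O, c * L a O + t < K a O} ≤ δ := by
  set bad : Set Y := {a | ∃ O, c * L a O + t < K a O}
  choose! O hO using fun a (ha : a ∈ bad) => ha
  let E : Set (X × Y) := {p | p.2 ∈ bad ∧ p.1 ∈ O p.2}
  have fiber_good {a : Y} (ha : a ∉ bad) : Prod.snd ⁻¹' {a} ∩ E = ∅ := by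
    ext p
    simp only [E]
    grind
  have fiber_bad {a : Y} (ha : a ∈ bad) :
      Prod.snd ⁻¹' {a} ∩ E = {p | p.2 = a ∧ p.1 ∈ O a} := by
    ext p
    simp only [E]
    grind
  have hfiber (a : Y) : c * prob ν (Prod.snd ⁻¹' {a} ∩ E) + t * prob M ({a} ∩ bad) ≤
      prob μ (Prod.snd ⁻¹' {a} ∩ E) := by
    by_cases ha : a ∈ bad
    · have hμa : prob μ {p | p.2 = a} = prob M {a} := by rw [← hμ, prob_map]; rfl
      have hνa : prob ν {p | p.2 = a} = prob M {a} := by rw [← hν, prob_map]; rfl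
      rw [fiber_bad ha, ← hK, ← hL, hμa, hνa,
        Set.inter_eq_left.2 (Set.singleton_subset_iff.2 ha)]
      linarith [mul_le_mul_of_nonneg_left (hO a ha).le (prob_nonneg M {a})]
    · simp [fiber_good ha, ha]
  have hglue : c * prob ν E + t * prob M bad ≤ prob μ E :=
    hasSum_le hfiber
      (((hasSum_prob_fiber ν Prod.snd E).mul_left c).add
        ((hasSum_prob_fiber M id bad).mul_left t))
      (hasSum_prob_fiber μ Prod.snd E)
  linarith [h E]

lemma one_le_prob_indistFn_add_prob_exists_lt (M : PMF Y) (K L : Y → Set X → ℝ) (ε t : ℝ) :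
    1 ≤ prob M {a | IndistFn (K a) (L a) ε t} +
      (prob M {a | ∃ O, Real.exp ε * L a O + t < K a O} +
        prob M {a | ∃ O, Real.exp ε * K a O + t < L a O}) := by
  have hcover : {a | IndistFn (K a) (L a) ε t} ∪ ({a | ∃ O, Real.exp ε * L a O + t < K a O} ∪
      {a | ∃ O, Real.exp ε * K a O + t < L a O}) = Set.univ := by
    refine Set.eq_univ_of_forall fun a => ?_
    simp only [IndistFn, Set.mem_union, Set.mem_ofPred_eq]
    by_contra! h
    exact h.1.elim fun O hO => (hO (h.2.1 O)).not_ge (h.2.2 O)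
  rw [← prob_univ M, ← hcover]
  exact (prob_union_le M _ _).trans (by gcongr; exact prob_union_le M _ _)

lemma IsCondLaw.one_sub_le_prob_indistFn {μ ν : PMF (X × Y)} {M : PMF Y} {K L : Y → Set X → ℝ}
    (hK : IsCondLaw μ K) (hL : IsCondLaw ν L)
    (hμ : μ.map Prod.snd = M) (hν : ν.map Prod.snd = M) {ε δ t : ℝ}
    (h : IndistFn (prob μ) (prob ν) ε δ) (ht : 0 < t) :
    1 - 2 * δ / t ≤ prob M {a | IndistFn (K a) (L a) ε t} := by
  have hKL := hK.mul_prob_exists_lt_le hL hμ hν (fun E => (h E).1) t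
  have hLK := hL.mul_prob_exists_lt_le hK hν hμ (fun E => (h E).2) t
  have hbad : prob M {a | ∃ O, Real.exp ε * L a O + t < K a O} +
      prob M {a | ∃ O, Real.exp ε * K a O + t < L a O} ≤ 2 * δ / t := by
    rw [le_div_iff₀ ht]
    linarith
  linarith [one_le_prob_indistFn_add_prob_exists_lt M K L ε t]

lemma indistFn_indepPair_jointPMF (P : PMF X) {B : X → PMF Y} {ε δ : ℝ}
    (hB : ∀ x x' O, prob (B x) O ≤ Real.exp ε * prob (B x') O + δ) :
    IndistFn (prob (indepPair P (P.bind B))) (prob (jointPMF P B)) ε δ := by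
  have bind_le (x : X) (O : Set Y) :
      prob (P.bind B) O ≤ Real.exp ε * prob (B x) O + δ := by
    simpa only [PMF.bind_const] using prob_bind_le (p := P) fun x' => hB x' x O
  have le_bind (x : X) (O : Set Y) :
      prob (B x) O ≤ Real.exp ε * prob (P.bind B) O + δ := by
    simpa only [PMF.bind_const] using prob_bind_le (p := P) fun x' => hB x x' O
  exact fun O => ⟨prob_jointPMF_le bind_le O, prob_jointPMF_le le_bind O⟩

lemma one_sub_le_prob_indistFn_posterior (P : PMF X) {B : X → PMF Y} {ε δ δhat : ℝ}
    (hB : ∀ x x' O, prob (B x) O ≤ Real.exp ε * prob (B x') O + δ) (hδhat : 0 < δhat) :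
    1 - 2 * δ / δhat ≤
      prob (jointPMF P B) {p | IndistFn (prob P) (posterior (jointPMF P B) p.2) ε δhat} := by
  have hindep : (indepPair P (P.bind B)).map Prod.snd = P.bind B :=
    (map_snd_jointPMF P fun _ => P.bind B).trans (P.bind_const _)
  have h := (isCondLaw_indepPair P (P.bind B)).one_sub_le_prob_indistFn
    (isCondLaw_posterior (jointPMF P B)) hindep (map_snd_jointPMF P B)
    (indistFn_indepPair_jointPMF P hB) hδhat
  rwa [← map_snd_jointPMF, prob_map] at h

end ConditionalLaw

section Prefix

variable {X Y : Type*} {n : ℕ}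

/-- The dataset with entries `w` before `i`, entry `x` at `i`, and entries `z` after `i`. -/
def splice (i : Fin n) (w : Fin n → X) (x : X) (z : Fin n → X) : Fin n → X :=
  Function.update (fun j => if j < i then w j else z j) i x

/-- The law of `X ∼ P^n` given `X₁^{i-1} = w₁^{i-1}`, with the entry `X_i` drawn separately. -/
noncomputable def iidGivenPrefix (P : PMF X) (i : Fin n) (w : Fin n → X) : PMF (Fin n → X) :=
  P.bind fun x => (iidPMF P n).map (splice i w x)

/-- The law of `A(X)` given `X₁^{i-1} = w₁^{i-1}` and `X_i = x`, for `X ∼ P^n`. -/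
noncomputable def entryKernel (A : (Fin n → X) → PMF Y) (P : PMF X) (i : Fin n)
    (w : Fin n → X) (x : X) : PMF Y :=
  (iidPMF P n).bind fun z => A (splice i w x z)

lemma splice_apply_self (i : Fin n) (w : Fin n → X) (x : X) (z : Fin n → X) :
    splice i w x z i = x :=
  Function.update_self ..

lemma neighbor_splice (i : Fin n) (w : Fin n → X) (x x' : X) (z : Fin n → X) :
    Neighbor (splice i w x z) (splice i w x' z) :=
  ⟨i, fun j hj => by simp only [splice, Function.update_of_ne hj]⟩

lemma splice_zero_cons (w : Fin (n + 1) → X) (x a : X) (z : Fin n → X) :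
    splice 0 w x (Fin.cons a z) = Fin.cons x z := by
  simp [splice]

lemma splice_succ_cons (i : Fin n) (w : Fin (n + 1) → X) (x a : X) (z : Fin n → X) :
    splice i.succ w x (Fin.cons a z) = Fin.cons (w 0) (splice i (Fin.tail w) x z) := by
  ext j
  cases j using Fin.cases <;> simp [splice, Function.update_apply, Fin.tail,
    (Fin.succ_ne_zero i).symm]

lemma prefixEq_succ_cons {i : Fin n} {w : Fin (n + 1) → X} {a : X} {z : Fin n → X} :
    PrefixEq i.succ w (Fin.cons a z) ↔ a = w 0 ∧ PrefixEq i (Fin.tail w) z := by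
  simp [PrefixEq, Fin.forall_fin_succ, Fin.tail]

lemma iidGivenPrefix_zero (P : PMF X) (w : Fin (n + 1) → X) :
    iidGivenPrefix P 0 w = iidPMF P (n + 1) := by
  simp [iidGivenPrefix, iidPMF, PMF.map_bind, PMF.map_comp, Function.comp_def, splice_zero_cons]

lemma iidGivenPrefix_succ (P : PMF X) (i : Fin n) (w : Fin (n + 1) → X) :
    iidGivenPrefix P i.succ w = (iidGivenPrefix P i (Fin.tail w)).map (Fin.cons (w 0)) := by
  simp [iidGivenPrefix, iidPMF, PMF.map_bind, PMF.map_comp, Function.comp_def, splice_succ_cons]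

lemma prob_iidPMF_prefixEq_inter (P : PMF X) (i : Fin n) (w : Fin n → X) (T : Set (Fin n → X)) :
    prob (iidPMF P n) ({z | PrefixEq i w z} ∩ T) =
      prob (iidPMF P n) {z | PrefixEq i w z} * prob (iidGivenPrefix P i w) T := by
  induction n with
  | zero => exact i.elim0
  | succ n ih =>
    cases i using Fin.cases with
    | zero => simp [PrefixEq, iidGivenPrefix_zero]
    | succ i =>
      have peel (U : Set (Fin (n + 1) → X)) :
          prob (iidPMF P (n + 1)) ({z | PrefixEq i.succ w z} ∩ U) = (P (w 0)).toReal *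
            prob (iidPMF P n) ({z | PrefixEq i (Fin.tail w) z} ∩
              (fun z => Fin.cons (w 0) z) ⁻¹' U) := by
        refine (hasSum_prob_bind P _ _).unique ?_
        convert hasSum_single (w 0) fun a ha => ?_ using 2
        · rw [prob_map]
          simp [Set.preimage_inter, prefixEq_succ_cons]
        · simp [prob_map, prefixEq_succ_cons, Set.preimage_inter, ha]
      have hprefix := peel Set.univ
      rw [Set.inter_univ, Set.preimage_univ, Set.inter_univ] at hprefix
      rw [peel, ih, hprefix, iidGivenPrefix_succ, prob_map, mul_assoc]

lemma map_jointPMF_iidGivenPrefix (A : (Fin n → X) → PMF Y) (P : PMF X) (i : Fin n)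
    (w : Fin n → X) :
    (jointPMF (iidGivenPrefix P i w) A).map (fun p => (p.1 i, p.2)) =
      jointPMF P (entryKernel A P i w) := by
  simp [jointPMF, iidGivenPrefix, entryKernel, PMF.map_bind, PMF.map_comp, PMF.bind_map,
    Function.comp_def, splice_apply_self]

lemma prob_prefixEq_and_mem (A : (Fin n → X) → PMF Y) (P : PMF X) (i : Fin n) (w : Fin n → X)
    (S : Set (X × Y)) :
    prob (jointPMF (iidPMF P n) A) {p | PrefixEq i w p.1 ∧ (p.1 i, p.2) ∈ S} =
      prob (jointPMF (iidPMF P n) A) {p | PrefixEq i w p.1} *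
        prob (jointPMF P (entryKernel A P i w)) S := by
  have hcond := prob_jointPMF_inter (prob_iidPMF_prefixEq_inter P i w) A
  have hprefix := hcond Set.univ
  rw [Set.inter_univ, prob_univ, mul_one] at hprefix
  rw [← map_jointPMF_iidGivenPrefix, prob_map]
  exact (hcond _).trans (congrArg (· * _) hprefix.symm)

lemma condXi_eq_posterior {A : (Fin n → X) → PMF Y} {P : PMF X} {i : Fin n} {w : Fin n → X}
    (hw : 0 < prob (jointPMF (iidPMF P n) A) {p | PrefixEq i w p.1}) (a : Y) :
    condXi (jointPMF (iidPMF P n) A) i a w = posterior (jointPMF P (entryKernel A P i w)) a := by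
  ext O
  have hjoint : {p : (Fin n → X) × Y | p.2 = a ∧ PrefixEq i w p.1 ∧ p.1 i ∈ O} =
      {p | PrefixEq i w p.1 ∧ (p.1 i, p.2) ∈ {q : X × Y | q.2 = a ∧ q.1 ∈ O}} :=
    Set.ext fun _ => and_left_comm
  have hmarg : {p : (Fin n → X) × Y | p.2 = a ∧ PrefixEq i w p.1} =
      {p | PrefixEq i w p.1 ∧ (p.1 i, p.2) ∈ {q : X × Y | q.2 = a}} :=
    Set.ext fun _ => and_comm
  rw [condXi, posterior, hjoint, hmarg, prob_prefixEq_and_mem, prob_prefixEq_and_mem,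
    mul_div_mul_left _ _ hw.ne']

end Prefix

section DiffPrivate

variable {X Y : Type*} {n : ℕ} {A : (Fin n → X) → PMF Y} {ε δ : ℝ}

lemma DiffPrivate.nonneg (hA : DiffPrivate A ε δ) (i : Fin n) (x : Fin n → X) : 0 ≤ δ := by
  simpa using hA x x ⟨i, fun _ _ => rfl⟩ ∅

lemma DiffPrivate.mono {ε' : ℝ} (hA : DiffPrivate A ε δ) (h : ε ≤ ε') : DiffPrivate A ε' δ :=
  fun x x' hx O => (hA x x' hx O).trans <| by
    gcongr
    exact prob_nonneg _ _

lemma DiffPrivate.prob_entryKernel_le (hA : DiffPrivate A ε δ) (P : PMF X) (i : Fin n)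
    (w : Fin n → X) (x x' : X) (O : Set Y) :
    prob (entryKernel A P i w x) O ≤ Real.exp ε * prob (entryKernel A P i w x') O + δ :=
  prob_bind_le fun z => hA _ _ (neighbor_splice i w x x' z) O

end DiffPrivate

theorem stmt_7_general {X Y : Type*} {n : ℕ} {A : (Fin n → X) → PMF Y} {ε δ δhat : ℝ}
    (hδhat : 0 < δhat) (hA : DiffPrivate A ε δ) {P : PMF X} {i : Fin n} {w : Fin n → X}
    (hw : 0 < prob (jointPMF (iidPMF P n) A) {p | PrefixEq i w p.1}) :
    1 - 2 * δ / δhat ≤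
      prob (jointPMF (iidPMF P n) A) {p | PrefixEq i w p.1 ∧
          IndistFn (prob P) (condXi (jointPMF (iidPMF P n) A) i p.2 w) ε δhat} /
        prob (jointPMF (iidPMF P n) A) {p | PrefixEq i w p.1} := by
  set J := jointPMF P (entryKernel A P i w)
  have hfactor : prob (jointPMF (iidPMF P n) A)
      {p | PrefixEq i w p.1 ∧ IndistFn (prob P) (posterior J p.2) ε δhat} =
        prob (jointPMF (iidPMF P n) A) {p | PrefixEq i w p.1} *
          prob J {p | IndistFn (prob P) (posterior J p.2) ε δhat} :=
    prob_prefixEq_and_mem A P i w {p | IndistFn (prob P) (posterior J p.2) ε δhat}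
  simp only [condXi_eq_posterior hw]
  rw [hfactor, mul_div_cancel_left₀ _ hw.ne']
  exact one_sub_le_prob_indistFn_posterior P (hA.prob_entryKernel_le P i w) hδhat

/-- **Claim 3.4.**  If `A` is `(ε,δ)`-differentially private and `X ∼ P^n`, then
for each `i`, each prefix `w₁^{i-1}` of positive probability, and every `δ̂ > 0`,
`Pr[(A(X), x₁^{i-1}) ∈ E_i(δ̂) | X₁^{i-1} = w₁^{i-1}] ≥ 1 - δ'` where
`δ' = 2δ/δ̂ + 2δ/(1 - e^{-ε})`. -/
theorem stmt_7 {X Y : Type*} [Countable X] {n : ℕ} (A : (Fin n → X) → PMF Y)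
    (ε δ δhat : ℝ) (hε : 0 < ε) (hδhat : 0 < δhat) (hA : DiffPrivate A ε δ)
    (P : PMF X) (i : Fin n) (w : Fin n → X)
    (hw : 0 < prob (jointPMF (iidPMF P n) A) {p | PrefixEq i w p.1}) :
    1 - (2 * δ / δhat + 2 * δ / (1 - Real.exp (-ε))) ≤
      prob (jointPMF (iidPMF P n) A)
          {p | PrefixEq i w p.1 ∧ (p.2, w) ∈ Eset (jointPMF (iidPMF P n) A) P i ε δhat} /
        prob (jointPMF (iidPMF P n) A) {p | PrefixEq i w p.1} := by
  have hslack : 0 ≤ 2 * δ / (1 - Real.exp (-ε)) :=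
    div_nonneg (by linarith [hA.nonneg i w]) (by simp [hε.le])
  exact le_trans (by linarith) (stmt_7_general hδhat (hA.mono (ε' := 3 * ε) (by linarith)) hw)
end

section
/- There exist absolute constants C, c, c' > 0 such that the following holds. Let ε ∈ (0,1), δ ≤ c·ε⁵, and n ≥ c'·log(ε/δ)/ε². Let Y denote the class of functions f : X^n → ℝ of sensitivity Δ > 0, and let A : X^n → Y be an (ε,δ)-differentially private algorithm. Let X ~ P^n for a distribution P over a countable domain X, and let q = A(X). Then Pr_{X, A}[ |q(P^n) − q(X)| ≥ C·ε·Δ·n ] < n·√(δ/ε), where q(P^n) = E_{X' ~ P^n}[q(X')]. -/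
open scoped ENNReal

/-!
Write `G = q(μ) - q(x)` for the generalization gap of the output `q = A(x)` and weight it by the
truncated exponential `φ = exp (lam * min G K)`. For an independent copy `x'` of the data,
`E[G φ] = E[(q(x') - q(x)) φ]`, and `q(x') - q(x)` is a sum of `n` increments along the hybrids
between `x` and `x'`. Exchanging the `i`-th entries of `x` and `x'` negates the `i`-th increment,
preserves the law of `(x, x')`, changes `φ` by a factor of at most `exp (lam * Δ)`, and changes the
law of `q` by at most `(ε, δ)`. The positive and negative parts of each increment therefore nearly
cancel, so that
`E[G φ] ≤ n * (exp (ε + lam * Δ) - 1) * Δ * E[φ] + n * δ * Δ * exp (lam * K)`.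
With `lam` of order `log (ε / δ) / (ε * Δ * n)`, a Markov-type argument for `φ` bounds the
probability of `G ≥ 16 * ε * Δ * n` by a multiple of `δ / ε`.
-/


section Mean

variable {α β : Type*} {μ : PMF α} {f g : α → ℝ}

/-- The expectation of `f` under the discrete distribution `μ`. It is meaningful for bounded `f`
(encoded as `Memℓp f ∞`) and has the junk value `0` when the series diverges. -/
noncomputable def mean (μ : PMF α) (f : α → ℝ) : ℝ :=
  ∑' a, (μ a).toReal * f a

lemma memℓp_infty_of_abs_le {M : ℝ} (hf : ∀ a, |f a| ≤ M) : Memℓp f ∞ :=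
  memℓp_infty ⟨M, Set.forall_mem_range.2 hf⟩

lemma memℓp_infty_of_nonneg_of_le {M : ℝ} (hf : 0 ≤ f) (hfM : ∀ a, f a ≤ M) : Memℓp f ∞ :=
  memℓp_infty_of_abs_le fun a => (abs_of_nonneg (hf a)).trans_le (hfM a)

lemma memℓp_infty_const (c : ℝ) : Memℓp (fun _ : α => c) ∞ :=
  memℓp_infty_of_abs_le fun _ => le_rfl

lemma memℓp_infty_comp (hf : Memℓp f ∞) (e : β → α) : Memℓp (f ∘ e) ∞ := by
  obtain ⟨M, hM⟩ := hf.bddAbove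
  exact memℓp_infty_of_abs_le fun b => hM ⟨e b, rfl⟩

lemma memℓp_infty_indicator (hf : Memℓp f ∞) (S : Set α) : Memℓp (S.indicator f) ∞ := by
  obtain ⟨M, hM⟩ := hf.bddAbove
  exact memℓp_infty_of_abs_le fun a => (norm_indicator_le_norm_self f a).trans (hM ⟨a, rfl⟩)

lemma hasSum_toReal_one (μ : PMF α) : HasSum (fun a => (μ a).toReal) 1 := by
  simpa [← ENNReal.tsum_toReal_eq μ.apply_ne_top] using
    ENNReal.hasSum_toReal μ.tsum_coe_ne_top

lemma summable_toReal_mul (μ : PMF α) (hf : Memℓp f ∞) :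
    Summable fun a => (μ a).toReal * f a := by
  obtain ⟨M, hM⟩ := hf.bddAbove
  refine .of_norm_bounded ((hasSum_toReal_one μ).summable.mul_right M) fun a => ?_
  rw [norm_mul, Real.norm_of_nonneg ENNReal.toReal_nonneg]
  exact mul_le_mul_of_nonneg_left (hM ⟨a, rfl⟩) ENNReal.toReal_nonneg

lemma mean_add (hf : Memℓp f ∞) (hg : Memℓp g ∞) : mean μ (f + g) = mean μ f + mean μ g := by
  simp only [mean, Pi.add_apply, mul_add,
    (summable_toReal_mul μ hf).tsum_add (summable_toReal_mul μ hg)]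

lemma mean_sub (hf : Memℓp f ∞) (hg : Memℓp g ∞) : mean μ (f - g) = mean μ f - mean μ g := by
  simp only [mean, Pi.sub_apply, mul_sub,
    (summable_toReal_mul μ hf).tsum_sub (summable_toReal_mul μ hg)]

lemma mean_sum {ι : Type*} (s : Finset ι) {f : ι → α → ℝ} (hf : ∀ i ∈ s, Memℓp (f i) ∞) :
    mean μ (∑ i ∈ s, f i) = ∑ i ∈ s, mean μ (f i) := by
  simp only [mean, Finset.sum_apply, Finset.mul_sum,
    Summable.tsum_finsetSum fun i hi => summable_toReal_mul μ (hf i hi)]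

lemma mean_neg : mean μ (-f) = -mean μ f := by
  simp only [mean, Pi.neg_apply, mul_neg, tsum_neg]

lemma mean_smul (c : ℝ) : mean μ (c • f) = c * mean μ f := by
  simp only [mean, Pi.smul_apply, smul_eq_mul, mul_left_comm _ c, tsum_mul_left]

lemma mean_mul_const (c : ℝ) : mean μ (fun a => f a * c) = mean μ f * c := by
  simp only [mean, ← mul_assoc, tsum_mul_right]

lemma mean_const (μ : PMF α) (c : ℝ) : mean μ (fun _ => c) = c := by
  rw [mean, tsum_mul_right, (hasSum_toReal_one μ).tsum_eq, one_mul]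

lemma mean_mono (hf : Memℓp f ∞) (hg : Memℓp g ∞) (hfg : f ≤ g) : mean μ f ≤ mean μ g :=
  (summable_toReal_mul μ hf).tsum_le_tsum
    (fun a => mul_le_mul_of_nonneg_left (hfg a) ENNReal.toReal_nonneg) (summable_toReal_mul μ hg)

lemma mean_nonneg (hf : 0 ≤ f) : 0 ≤ mean μ f :=
  tsum_nonneg fun a => mul_nonneg ENNReal.toReal_nonneg (hf a)

lemma abs_mean_le {M : ℝ} (hf : ∀ a, |f a| ≤ M) : |mean μ f| ≤ M := by
  have hfb := memℓp_infty_of_abs_le hf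
  rw [abs_le]
  constructor
  · simpa only [mean_const] using
      mean_mono (μ := μ) (memℓp_infty_const (-M)) hfb fun a => (abs_le.1 (hf a)).1
  · simpa only [mean_const] using
      mean_mono (μ := μ) hfb (memℓp_infty_const M) fun a => (abs_le.1 (hf a)).2

lemma memℓp_infty_mean (κ : α → PMF β) {f : α → β → ℝ} {M : ℝ} (hf : ∀ a b, |f a b| ≤ M) :
    Memℓp (fun a => mean (κ a) (f a)) ∞ :=
  memℓp_infty_of_abs_le fun a => abs_mean_le (hf a)

lemma mean_pure (a : α) (f : α → ℝ) : mean (PMF.pure a) f = f a := by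
  rw [mean, tsum_eq_single a fun b hb => by simp [hb]]
  simp

lemma summable_toReal_mul_toReal (μ : PMF α) (κ : α → PMF β) :
    Summable fun p : α × β => (μ p.1).toReal * (κ p.1 p.2).toReal := by
  simp only [← ENNReal.toReal_mul]
  refine ENNReal.summable_toReal ?_
  simp [ENNReal.tsum_prod', ENNReal.tsum_mul_left]

lemma mean_bind (μ : PMF α) (κ : α → PMF β) {f : β → ℝ} (hf : Memℓp f ∞) :
    mean (μ.bind κ) f = mean μ fun a => mean (κ a) f := by
  obtain ⟨M, hM⟩ := hf.bddAbove
  have hsum : Summable fun p : α × β => (μ p.1).toReal * (κ p.1 p.2).toReal * f p.2 := by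
    refine .of_norm_bounded ((summable_toReal_mul_toReal μ κ).mul_right M) fun p => ?_
    rw [norm_mul, Real.norm_of_nonneg (by positivity)]
    exact mul_le_mul_of_nonneg_left (hM ⟨p.2, rfl⟩) (by positivity)
  have hbind (b : β) : (μ.bind κ b).toReal = ∑' a, (μ a).toReal * (κ a b).toReal := by
    simp only [PMF.bind_apply, ← ENNReal.toReal_mul]
    exact ENNReal.tsum_toReal_eq fun a =>
      ENNReal.mul_ne_top (μ.apply_ne_top a) ((κ a).apply_ne_top b)
  calc mean (μ.bind κ) f
      = ∑' b, ∑' a, (μ a).toReal * (κ a b).toReal * f b := by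
        simp only [mean, hbind, tsum_mul_right]
    _ = ∑' a, ∑' b, (μ a).toReal * (κ a b).toReal * f b :=
        Summable.tsum_comm (f := fun a b => (μ a).toReal * (κ a b).toReal * f b) hsum
    _ = mean μ fun a => mean (κ a) f := by simp only [mean, mul_assoc, tsum_mul_left]

lemma mean_map (μ : PMF α) (e : α → β) {f : β → ℝ} (hf : Memℓp f ∞) :
    mean (μ.map e) f = mean μ (f ∘ e) := by
  simp only [PMF.map, mean_bind μ _ hf, Function.comp_def, mean_pure]

lemma mean_jointPMF (μ : PMF α) (κ : α → PMF β) {f : α × β → ℝ} (hf : Memℓp f ∞) :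
    mean (jointPMF μ κ) f = mean μ fun a => mean (κ a) fun b => f (a, b) := by
  simp only [jointPMF, mean_bind μ _ hf, mean_map _ _ hf, Function.comp_def]

end Mean

section Prob

variable {α β : Type*}

lemma prob_eq_mean_indicator (μ : PMF α) (S : Set α) : prob μ S = mean μ (S.indicator 1) := by
  rw [prob, mean, PMF.toOuterMeasure_apply, ENNReal.tsum_toReal_eq fun a =>
    ne_top_of_le_ne_top (μ.apply_ne_top a) (Set.indicator_le_self S μ a)]
  refine tsum_congr fun a => ?_
  by_cases ha : a ∈ S <;> simp [ha]

lemma prob_mono_of_inter_support_subset {μ : PMF α} {S T : Set α} (h : S ∩ μ.support ⊆ T) :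
    prob μ S ≤ prob μ T :=
  ENNReal.toReal_mono (toOuterMeasure_ne_top μ T) (PMF.toOuterMeasure_mono μ h)

lemma jointPMF_apply (μ : PMF α) (κ : α → PMF β) (p : α × β) :
    jointPMF μ κ p = μ p.1 * κ p.1 p.2 := by
  classical
  obtain ⟨a, b⟩ := p
  simp only [jointPMF, PMF.bind_apply, PMF.map_apply, Prod.mk.injEq, ite_and]
  rw [tsum_eq_single a fun a' ha' => by simp [ha'.symm]]
  simp

lemma indepPair_apply (μ : PMF α) (ν : PMF β) (p : α × β) :
    indepPair μ ν p = μ p.1 * ν p.2 :=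
  jointPMF_apply μ (fun _ => ν) p

lemma iidPMF_apply (P : PMF α) (n : ℕ) (x : Fin n → α) : iidPMF P n x = ∏ i, P (x i) := by
  classical
  induction n with
  | zero => simp [iidPMF, Subsingleton.elim x fun i => i.elim0]
  | succ n ih =>
    induction x using Fin.consCases with
    | _ a y =>
      simp only [iidPMF, PMF.bind_apply, PMF.map_apply, Fin.cons_inj, ite_and]
      rw [tsum_eq_single a fun b hb => by simp [hb.symm]]
      simp [ih, Fin.prod_univ_succ]

end Prob

section FunctionalPrivacy

variable {β : Type*}

/- The extremal event is `{b | e * ν b < μ b}`: there `g` may be raised to `M`, elsewhere lowered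
to `0`. -/
lemma mean_le_of_prob_le {μ ν : PMF β} {e δ M : ℝ} {g : β → ℝ}
    (h : ∀ O, prob μ O ≤ e * prob ν O + δ) (hM : 0 ≤ M) (hg : 0 ≤ g) (hgM : ∀ b, g b ≤ M) :
    mean μ g ≤ e * mean ν g + δ * M := by
  have hgb := memℓp_infty_of_nonneg_of_le hg hgM
  set O : Set β := {b | e * (ν b).toReal < (μ b).toReal}
  have hO : Memℓp (O.indicator (1 : β → ℝ)) ∞ := memℓp_infty_indicator one_memℓp_infty O
  have hlayer : mean μ g - e * mean ν g ≤ M * (prob μ O - e * prob ν O) := by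
    simp only [prob_eq_mean_indicator, mean, ← tsum_mul_left]
    rw [← (summable_toReal_mul μ hgb).tsum_sub ((summable_toReal_mul ν hgb).mul_left e),
      ← (summable_toReal_mul μ hO).tsum_sub ((summable_toReal_mul ν hO).mul_left e),
      ← tsum_mul_left]
    refine Summable.tsum_le_tsum (fun b => ?_)
      ((summable_toReal_mul μ hgb).sub ((summable_toReal_mul ν hgb).mul_left e))
      (((summable_toReal_mul μ hO).sub ((summable_toReal_mul ν hO).mul_left e)).mul_left M)
    by_cases hb : b ∈ O
    · have hpos : e * (ν b).toReal < (μ b).toReal := hb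
      simp only [hb, Set.indicator_of_mem, Pi.one_apply]
      linarith [mul_le_mul_of_nonneg_left (hgM b) (sub_pos.2 hpos).le]
    · have hneg : (μ b).toReal ≤ e * (ν b).toReal := not_lt.1 hb
      simp only [hb, Set.indicator_of_notMem, not_false_eq_true]
      linarith [mul_le_mul_of_nonneg_right hneg (hg b)]
  linarith [mul_le_mul_of_nonneg_left (h O) hM]

end FunctionalPrivacy

section Hybrid

variable {ι X : Type*} [DecidableEq ι] {n : ℕ}

/-- Exchange the `i`-th entries of two datasets. -/
def swapCoord (i : ι) (p : (ι → X) × (ι → X)) : (ι → X) × (ι → X) :=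
  (Function.update p.1 i (p.2 i), Function.update p.2 i (p.1 i))

lemma swapCoord_involutive (i : ι) :
    Function.Involutive (swapCoord i : (ι → X) × (ι → X) → (ι → X) × (ι → X)) := by
  intro p
  simp [swapCoord]

/-- The hybrid of two datasets: entries with index below `k` come from the second one, the others
from the first one. -/
def hybrid (k : ℕ) (p : (Fin n → X) × (Fin n → X)) : Fin n → X :=
  fun j => if (j : ℕ) < k then p.2 j else p.1 j

lemma hybrid_zero (p : (Fin n → X) × (Fin n → X)) : hybrid 0 p = p.1 := by
  ext j
  simp [hybrid]

lemma hybrid_self (p : (Fin n → X) × (Fin n → X)) : hybrid n p = p.2 := by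
  ext j
  simp [hybrid]

lemma hybrid_succ (i : Fin n) (p : (Fin n → X) × (Fin n → X)) :
    hybrid (i + 1) p = Function.update (hybrid i p) i (p.2 i) := by
  ext j
  rcases eq_or_ne j i with rfl | hj
  · simp [hybrid]
  · have hlt : (j : ℕ) < i + 1 ↔ (j : ℕ) < i :=
      Nat.lt_succ_iff_lt_or_eq.trans (or_iff_left (Fin.val_ne_of_ne hj))
    simp [hybrid, hj, hlt]

lemma hybrid_swapCoord (i : Fin n) (p : (Fin n → X) × (Fin n → X)) :
    hybrid i (swapCoord i p) = hybrid (i + 1) p := by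
  rw [hybrid_succ]
  ext j
  rcases eq_or_ne j i with rfl | hj
  · simp [hybrid, swapCoord]
  · simp [hybrid, swapCoord, hj]

lemma hybrid_succ_swapCoord (i : Fin n) (p : (Fin n → X) × (Fin n → X)) :
    hybrid (i + 1) (swapCoord i p) = hybrid i p := by
  rw [← hybrid_swapCoord, swapCoord_involutive i p]

/-- The change of `q` when the `i`-th entry of the first dataset is replaced in the hybrid chain
from the first dataset to the second. -/
def hybridDiff (q : (Fin n → X) → ℝ) (i : Fin n) (p : (Fin n → X) × (Fin n → X)) : ℝ :=
  q (hybrid (i + 1) p) - q (hybrid i p)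

lemma sum_hybridDiff (q : (Fin n → X) → ℝ) (p : (Fin n → X) × (Fin n → X)) :
    ∑ i, hybridDiff q i p = q p.2 - q p.1 := by
  simp only [hybridDiff]
  rw [Fin.sum_univ_eq_sum_range fun i => q (hybrid (i + 1) p) - q (hybrid i p),
    Finset.sum_range_sub fun i => q (hybrid i p), hybrid_self, hybrid_zero]

lemma hybridDiff_swapCoord (q : (Fin n → X) → ℝ) (i : Fin n) (p : (Fin n → X) × (Fin n → X)) :
    hybridDiff q i (swapCoord i p) = -hybridDiff q i p := by
  rw [hybridDiff, hybridDiff, hybrid_swapCoord, hybrid_succ_swapCoord, neg_sub]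

end Hybrid

section Sensitivity

variable {ι X : Type*} [DecidableEq ι] {n : ℕ} {Δ : ℝ}

/-- The sensitivity of `q` is at most `Δ`: changing one entry of the dataset changes `q` by at
most `Δ`. -/
def HasSensitivity (q : (ι → X) → ℝ) (Δ : ℝ) : Prop :=
  ∀ (i : ι) (x : ι → X) (v : X), |q x - q (Function.update x i v)| ≤ Δ

namespace HasSensitivity

lemma zero (hΔ : 0 ≤ Δ) : HasSensitivity (0 : (ι → X) → ℝ) Δ := by
  simpa [HasSensitivity] using fun _ _ _ => hΔ

lemma neg {q : (ι → X) → ℝ} (hq : HasSensitivity q Δ) : HasSensitivity (-q) Δ := by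
  intro i x v
  rw [Pi.neg_apply, Pi.neg_apply, neg_sub_neg, abs_sub_comm]
  exact hq i x v

variable {q : (Fin n → X) → ℝ}

lemma abs_hybridDiff_le (hq : HasSensitivity q Δ) (i : Fin n) (p : (Fin n → X) × (Fin n → X)) :
    |hybridDiff q i p| ≤ Δ := by
  rw [hybridDiff, hybrid_succ, abs_sub_comm]
  exact hq _ _ _

lemma abs_sub_le (hq : HasSensitivity q Δ) (x x' : Fin n → X) : |q x' - q x| ≤ n * Δ := by
  rw [← sum_hybridDiff q (x, x')]
  calc |∑ i, hybridDiff q i (x, x')| ≤ ∑ i, |hybridDiff q i (x, x')| :=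
        Finset.abs_sum_le_sum_abs _ _
    _ ≤ ∑ _i : Fin n, Δ := Finset.sum_le_sum fun i _ => hq.abs_hybridDiff_le i (x, x')
    _ = n * Δ := by simp

lemma memℓp_infty (hq : HasSensitivity q Δ) : Memℓp q ∞ := by
  rcases isEmpty_or_nonempty (Fin n → X) with hX | ⟨⟨x₀⟩⟩
  · exact Memℓp.all q
  · refine memℓp_infty_of_abs_le (M := n * Δ + |q x₀|) fun x => ?_
    linarith [hq.abs_sub_le x₀ x, abs_sub_abs_le_abs_sub (q x) (q x₀)]

end HasSensitivity

/-- The generalization gap `q(μ) - q(x)` between the population value and the empirical value of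
the query `q`. -/
noncomputable def gap {D : Type*} (μ : PMF D) (q : D → ℝ) (x : D) : ℝ :=
  mean μ q - q x

lemma gap_neg {D : Type*} (μ : PMF D) (q : D → ℝ) (x : D) : gap μ (-q) x = -gap μ q x := by
  rw [gap, gap, mean_neg, Pi.neg_apply, neg_sub_neg, neg_sub]

lemma mean_sub_apply_eq_gap {D : Type*} {μ : PMF D} {q : D → ℝ} (hq : Memℓp q ∞) (x : D) :
    mean μ (fun x' => q x' - q x) = gap μ q x := by
  rw [gap, ← mean_const μ (q x), ← mean_sub hq (memℓp_infty_const _), mean_const]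
  rfl

lemma HasSensitivity.abs_gap_le {q : (Fin n → X) → ℝ} (hq : HasSensitivity q Δ)
    (μ : PMF (Fin n → X)) (x : Fin n → X) : |gap μ q x| ≤ n * Δ := by
  rw [← mean_sub_apply_eq_gap hq.memℓp_infty]
  exact abs_mean_le fun x' => hq.abs_sub_le x x'

lemma HasSensitivity.gap_update_le {q : (ι → X) → ℝ} (hq : HasSensitivity q Δ)
    (μ : PMF (ι → X)) (x : ι → X) (i : ι) (v : X) :
    gap μ q (Function.update x i v) ≤ gap μ q x + Δ := by
  rw [gap, gap]
  linarith [le_of_abs_le (hq i x v)]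

end Sensitivity

section GhostSample

/-- The law of `((x, x'), y)` where `x` and `x'` are independent samples from `μ` and `y` is the
output of `A` on `x`: the "ghost" sample `x'` is independent of `(x, y)`. -/
noncomputable def ghostPMF {D Y : Type*} (μ : PMF D) (A : D → PMF Y) : PMF ((D × D) × Y) :=
  jointPMF (indepPair μ μ) fun p => A p.1

lemma ghostPMF_eq_bind {D Y : Type*} (μ : PMF D) (A : D → PMF Y) :
    ghostPMF μ A = (jointPMF μ A).bind fun ω => μ.map fun x' => ((ω.1, x'), ω.2) := by
  simp only [ghostPMF, jointPMF, indepPair, PMF.map, PMF.bind_bind, PMF.pure_bind,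
    Function.comp_apply]
  exact congrArg μ.bind (funext fun x => PMF.bind_comm _ _ _)

lemma mean_ghostPMF {D Y : Type*} (μ : PMF D) (A : D → PMF Y) {g : (D × D) × Y → ℝ}
    (hg : Memℓp g ∞) :
    mean (ghostPMF μ A) g =
      mean (jointPMF μ A) fun ω => mean μ fun x' => g ((ω.1, x'), ω.2) := by
  simp only [ghostPMF_eq_bind, mean_bind _ _ hg, mean_map _ _ hg, Function.comp_def]

variable {X Y : Type*} {n : ℕ} {ε δ Δ : ℝ}

/-- The entries of a dataset drawn from `μ` are independent. This is encoded through resampling: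
exchanging the `i`-th entries of two independent datasets does not change their joint law. -/
def HasIndepEntries (μ : PMF (Fin n → X)) : Prop :=
  ∀ i, (indepPair μ μ).map (swapCoord i) = indepPair μ μ

lemma hasIndepEntries_iidPMF (P : PMF X) (n : ℕ) : HasIndepEntries (iidPMF P n) := by
  intro i
  have hswap (p : (Fin n → X) × (Fin n → X)) :
      indepPair (iidPMF P n) (iidPMF P n) (swapCoord i p) =
        indepPair (iidPMF P n) (iidPMF P n) p := by
    simp only [indepPair_apply, iidPMF_apply, ← Finset.prod_mul_distrib]
    refine Finset.prod_congr rfl fun j _ => ?_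
    rcases eq_or_ne j i with rfl | hj
    · simp [swapCoord, mul_comm]
    · simp [swapCoord, hj]
  have heq_swap (p p' : (Fin n → X) × (Fin n → X)) : p = swapCoord i p' ↔ p' = swapCoord i p :=
    eq_comm.trans (swapCoord_involutive i).eq_iff
  ext p
  rw [PMF.map_apply,
    tsum_eq_single (swapCoord i p) fun p' hp' => if_neg (mt (heq_swap p p').1 hp'),
    if_pos ((heq_swap p _).2 rfl), hswap]

lemma neighbor_fst_swapCoord (i : Fin n) (p : (Fin n → X) × (Fin n → X)) :
    Neighbor p.1 (swapCoord i p).1 :=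
  ⟨i, fun j hj => by simp [swapCoord, hj]⟩

lemma DiffPrivate.mean_jointPMF_le_swapCoord {A : (Fin n → X) → PMF Y} (hA : DiffPrivate A ε δ)
    {π : PMF ((Fin n → X) × (Fin n → X))} {i : Fin n} (hπ : π.map (swapCoord i) = π)
    {g : ((Fin n → X) × (Fin n → X)) × Y → ℝ} {M : ℝ} (hM : 0 ≤ M) (hg : 0 ≤ g)
    (hgM : ∀ ω, g ω ≤ M) :
    mean (jointPMF π fun p => A p.1) g ≤
      Real.exp ε * mean (jointPMF π fun p => A p.1) (g ∘ Prod.map (swapCoord i) id) + δ * M := by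
  have hgb := memℓp_infty_of_nonneg_of_le hg hgM
  have hgabs (ω) : |g ω| ≤ M := (abs_of_nonneg (hg ω)).trans_le (hgM ω)
  have hsection (κ : (Fin n → X) × (Fin n → X) → PMF Y) :
      Memℓp (fun p => mean (κ p) fun y => g (p, y)) ∞ :=
    memℓp_infty_mean κ fun _ _ => hgabs _
  have hchange : mean π (fun p => mean (A (swapCoord i p).1) fun y => g (p, y)) =
      mean (jointPMF π fun p => A p.1) (g ∘ Prod.map (swapCoord i) id) := by
    rw [mean_jointPMF _ _ (memℓp_infty_comp hgb _)]
    nth_rw 1 [← hπ]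
    rw [mean_map _ _ (hsection _)]
    simp [Function.comp_def, swapCoord_involutive i _]
  calc mean (jointPMF π fun p => A p.1) g
      = mean π fun p => mean (A p.1) fun y => g (p, y) := mean_jointPMF _ _ hgb
    _ ≤ mean π ((Real.exp ε • fun p => mean (A (swapCoord i p).1) fun y => g (p, y)) +
          fun _ => δ * M) :=
        mean_mono (hsection _) (((hsection _).const_smul _).add (memℓp_infty_const _)) fun p =>
          mean_le_of_prob_le (hA _ _ (neighbor_fst_swapCoord i p)) hM (fun _ => hg _)
            fun _ => hgM _
    _ = _ := by
        rw [mean_add ((hsection _).const_smul _) (memℓp_infty_const _), mean_smul, mean_const,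
          hchange]

lemma posPart_apply_le {Ω : Type*} {d : Ω → ℝ} (hd : ∀ ω, |d ω| ≤ Δ) (ω : Ω) : d⁺ ω ≤ Δ :=
  (sup_le (le_abs_self (d ω)) (abs_nonneg (d ω))).trans (hd ω)

lemma negPart_apply_le {Ω : Type*} {d : Ω → ℝ} (hd : ∀ ω, |d ω| ≤ Δ) (ω : Ω) : d⁻ ω ≤ Δ :=
  (sup_le (neg_le_abs (d ω)) (abs_nonneg (d ω))).trans (hd ω)

/- Writing `d = d⁺ - d⁻`, the map `S` turns `d⁺` into `d⁻`, so the hypothesis bounds the mean of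
`d⁺ * φ` by about that of `d⁻ * φ`. -/
lemma mean_mul_le_of_comp_eq_neg {Ω : Type*} {ν : PMF Ω} {S : Ω → Ω} {d φ : Ω → ℝ}
    {e r B : ℝ} (hd : d ∘ S = -d) (hdΔ : ∀ ω, |d ω| ≤ Δ) (hφ : 0 ≤ φ) (hφB : ∀ ω, φ ω ≤ B)
    (hφS : φ ∘ S ≤ r • φ) (he : 0 ≤ e) (her : 1 ≤ e * r)
    (hν : mean ν (d⁺ * φ) ≤ e * mean ν ((d⁺ * φ) ∘ S) + δ * (Δ * B)) :
    mean ν (d * φ) ≤ (e * r - 1) * Δ * mean ν φ + δ * (Δ * B) := by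
  have hφb := memℓp_infty_of_nonneg_of_le hφ hφB
  have hpos : Memℓp (d⁺ * φ) ∞ :=
    (memℓp_infty_of_nonneg_of_le (posPart_nonneg d) (posPart_apply_le hdΔ)).infty_mul hφb
  have hnegle : d⁻ * φ ≤ Δ • φ := fun ω =>
    mul_le_mul_of_nonneg_right (negPart_apply_le hdΔ ω) (hφ ω)
  have hneg : Memℓp (d⁻ * φ) ∞ :=
    (memℓp_infty_of_nonneg_of_le (negPart_nonneg d) (negPart_apply_le hdΔ)).infty_mul hφb
  have hsplit : mean ν (d * φ) = mean ν (d⁺ * φ) - mean ν (d⁻ * φ) := by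
    rw [← mean_sub hpos hneg, ← sub_mul, posPart_sub_negPart]
  have hswap : mean ν ((d⁺ * φ) ∘ S) ≤ r * mean ν (d⁻ * φ) := by
    rw [← mean_smul]
    refine mean_mono (memℓp_infty_comp hpos S) (hneg.const_smul r) fun ω => ?_
    have hdS : d⁺ ∘ S = d⁻ := (congrArg posPart hd).trans (posPart_neg d)
    calc d⁺ (S ω) * φ (S ω) = d⁻ ω * φ (S ω) := congrArg (· * φ (S ω)) (congrFun hdS ω)
      _ ≤ d⁻ ω * (r * φ ω) := mul_le_mul_of_nonneg_left (hφS ω) (negPart_nonneg d ω)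
      _ = r * (d⁻ ω * φ ω) := mul_left_comm _ _ _
  calc mean ν (d * φ)
      ≤ e * (r * mean ν (d⁻ * φ)) + δ * (Δ * B) - mean ν (d⁻ * φ) := by
        rw [hsplit]
        exact sub_le_sub_right (hν.trans (add_le_add_left
          (mul_le_mul_of_nonneg_left hswap he) _)) _
    _ = (e * r - 1) * mean ν (d⁻ * φ) + δ * (Δ * B) := by ring
    _ ≤ (e * r - 1) * (Δ * mean ν φ) + δ * (Δ * B) := by
        have := mean_mono (μ := ν) hneg (hφb.const_smul Δ) hnegle
        rw [mean_smul] at this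
        exact add_le_add_left (mul_le_mul_of_nonneg_left this (sub_nonneg.2 her)) _
    _ = (e * r - 1) * Δ * mean ν φ + δ * (Δ * B) := by ring

variable {A : (Fin n → X) → PMF Y} {μ : PMF (Fin n → X)} {Q : Y → (Fin n → X) → ℝ}

lemma mean_gap_mul_eq_sum (hQ : ∀ y, HasSensitivity (Q y) Δ) {φ : (Fin n → X) × Y → ℝ}
    (hφ : Memℓp φ ∞) :
    mean (jointPMF μ A) (fun ω => gap μ (Q ω.2) ω.1 * φ ω) =
      ∑ i, mean (ghostPMF μ A)
        ((fun ω => hybridDiff (Q ω.2) i ω.1) * φ ∘ Prod.map Prod.fst id) := by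
  have hφg := memℓp_infty_comp hφ
    (Prod.map Prod.fst id : ((Fin n → X) × (Fin n → X)) × Y → (Fin n → X) × Y)
  have hterm (i : Fin n) : Memℓp ((fun ω => hybridDiff (Q ω.2) i ω.1) *
      φ ∘ (Prod.map Prod.fst id : ((Fin n → X) × (Fin n → X)) × Y → (Fin n → X) × Y)) ∞ :=
    Memℓp.infty_mul (memℓp_infty_of_abs_le fun ω => (hQ ω.2).abs_hybridDiff_le i ω.1) hφg
  rw [← mean_sum _ fun i _ => hterm i, mean_ghostPMF _ _ (by
    simpa only [Finset.sum_fn] using Memℓp.finsetSum Finset.univ fun i _ => hterm i)]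
  simp only [Finset.sum_apply, Pi.mul_apply, Function.comp_apply, Prod.map_apply, id,
    ← Finset.sum_mul, sum_hybridDiff, mean_mul_const,
    mean_sub_apply_eq_gap (hQ _).memℓp_infty]

theorem DiffPrivate.mean_gap_mul_le (hA : DiffPrivate A ε δ)
    (hμ : HasIndepEntries μ)
    (hQ : ∀ y, HasSensitivity (Q y) Δ) (hΔ : 0 ≤ Δ) {φ : (Fin n → X) × Y → ℝ} {r B : ℝ}
    (hφ : 0 ≤ φ) (hφB : ∀ ω, φ ω ≤ B) (hB : 0 ≤ B)
    (hφr : ∀ x i v y, φ (Function.update x i v, y) ≤ r * φ (x, y)) (hr : 1 ≤ Real.exp ε * r) :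
    mean (jointPMF μ A) (fun ω => gap μ (Q ω.2) ω.1 * φ ω) ≤
      n * ((Real.exp ε * r - 1) * Δ * mean (jointPMF μ A) φ + δ * (Δ * B)) := by
  have hφb := memℓp_infty_of_nonneg_of_le hφ hφB
  have hmarginal : mean (ghostPMF μ A) (φ ∘ Prod.map Prod.fst id) = mean (jointPMF μ A) φ := by
    simp [mean_ghostPMF _ _ (memℓp_infty_comp hφb _), mean_const]
  have hincrement (i : Fin n) : mean (ghostPMF μ A)
      ((fun ω => hybridDiff (Q ω.2) i ω.1) * φ ∘ Prod.map Prod.fst id) ≤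
        (Real.exp ε * r - 1) * Δ * mean (jointPMF μ A) φ + δ * (Δ * B) := by
    rw [← hmarginal]
    refine mean_mul_le_of_comp_eq_neg (S := Prod.map (swapCoord i) id)
      (funext fun ω => hybridDiff_swapCoord _ _ _)
      (fun ω => (hQ ω.2).abs_hybridDiff_le i ω.1) (fun ω => hφ _) (fun ω => hφB _)
      (fun ω => hφr _ _ _ _) (Real.exp_pos ε).le hr ?_
    refine hA.mean_jointPMF_le_swapCoord (hμ i) (mul_nonneg hΔ hB)
      (mul_nonneg (posPart_nonneg _) fun ω => hφ _) fun ω => ?_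
    exact mul_le_mul (posPart_apply_le (fun ω => (hQ ω.2).abs_hybridDiff_le i ω.1) ω) (hφB _)
      (hφ _) hΔ
  rw [mean_gap_mul_eq_sum hQ hφb]
  exact (Finset.sum_le_sum fun i _ => hincrement i).trans_eq (by simp [mul_add])

end GhostSample

section TruncatedExponentialMoment

variable {lam K Δ z z' m : ℝ}

/-- The exponential weight `exp (lam * z)`, truncated at level `K` so that it stays bounded. It is
the test function of the moment argument: an additive `δ` in privacy costs at most
`δ * exp (lam * K)`. -/
noncomputable def truncExp (lam K z : ℝ) : ℝ :=
  Real.exp (lam * min z K)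

lemma truncExp_le (hlam : 0 ≤ lam) (K z : ℝ) : truncExp lam K z ≤ Real.exp (lam * K) :=
  Real.exp_le_exp.2 (mul_le_mul_of_nonneg_left (min_le_right z K) hlam)

lemma truncExp_le_of_le_add (hlam : 0 ≤ lam) (hΔ : 0 ≤ Δ) (hz : z' ≤ z + Δ) :
    truncExp lam K z' ≤ Real.exp (lam * Δ) * truncExp lam K z := by
  have hmin : min z' K ≤ Δ + min z K := by
    rw [← min_add_add_left]
    exact min_le_min (hz.trans_eq (add_comm z Δ)) (le_add_of_nonneg_left hΔ)
  rw [truncExp, truncExp, ← Real.exp_add, ← mul_add]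
  exact Real.exp_le_exp.2 (mul_le_mul_of_nonneg_left hmin hlam)

lemma sub_mul_exp_le (hlam : 0 < lam) (m z : ℝ) :
    (m - z) * Real.exp (lam * z) ≤ Real.exp (lam * m) / lam := by
  rw [le_div_iff₀ hlam]
  calc (m - z) * Real.exp (lam * z) * lam
      = lam * (m - z) * Real.exp (lam * z) := by ring
    _ ≤ Real.exp (lam * (m - z)) * Real.exp (lam * z) :=
        mul_le_mul_of_nonneg_right
          ((le_add_of_nonneg_right zero_le_one).trans (Real.add_one_le_exp _)) (Real.exp_pos _).le
    _ = Real.exp (lam * m) := by rw [← Real.exp_add]; ring_nf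

lemma mul_indicator_Ici_le_sub_mul_truncExp (hlam : 0 < lam) (K m z : ℝ) :
    (K - m) * Real.exp (lam * K) * (Set.Ici K).indicator 1 z ≤
      (z - m) * truncExp lam K z + Real.exp (lam * m) / lam := by
  rcases le_or_gt K z with hKz | hzK
  · rw [truncExp, min_eq_right hKz, Set.indicator_of_mem (Set.mem_Ici.2 hKz), Pi.one_apply, mul_one]
    exact (mul_le_mul_of_nonneg_right (sub_le_sub_right hKz m) (Real.exp_pos _).le).trans
      (le_add_of_nonneg_right (by positivity))
  · rw [truncExp, min_eq_left hzK.le, Set.indicator_of_notMem (Set.notMem_Ici.2 hzK), mul_zero]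
    linarith [sub_mul_exp_le hlam m z]

lemma mul_prob_le_of_mean_mul_truncExp_le {Ω : Type*} {ν : PMF Ω} {f : Ω → ℝ} {b : ℝ}
    (hf : Memℓp f ∞) (hlam : 0 < lam)
    (h : mean ν (f * truncExp lam K ∘ f) ≤ m * mean ν (truncExp lam K ∘ f) + b) :
    (K - m) * Real.exp (lam * K) * prob ν {ω | K ≤ f ω} ≤ b + Real.exp (lam * m) / lam := by
  have hφ : Memℓp (truncExp lam K ∘ f) ∞ :=
    memℓp_infty_of_nonneg_of_le (fun _ => (Real.exp_pos _).le) fun ω => truncExp_le hlam.le K (f ω)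
  have hS : Memℓp ({ω | K ≤ f ω}.indicator (1 : Ω → ℝ)) ∞ :=
    memℓp_infty_indicator one_memℓp_infty _
  have hfφ := hf.infty_mul hφ
  calc (K - m) * Real.exp (lam * K) * prob ν {ω | K ≤ f ω}
      = mean ν (((K - m) * Real.exp (lam * K)) • {ω | K ≤ f ω}.indicator 1) := by
        rw [mean_smul, prob_eq_mean_indicator]
    _ ≤ mean ν (f * truncExp lam K ∘ f - m • truncExp lam K ∘ f +
          fun _ => Real.exp (lam * m) / lam) :=
        mean_mono (hS.const_smul _) ((hfφ.sub (hφ.const_smul m)).add (memℓp_infty_const _))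
          fun ω => (mul_indicator_Ici_le_sub_mul_truncExp hlam K m (f ω)).trans_eq
            (by simp [sub_mul])
    _ = mean ν (f * truncExp lam K ∘ f) - m * mean ν (truncExp lam K ∘ f) +
          Real.exp (lam * m) / lam := by
        rw [mean_add (hfφ.sub (hφ.const_smul m)) (memℓp_infty_const _),
          mean_sub hfφ (hφ.const_smul m), mean_smul, mean_const]
    _ ≤ b + Real.exp (lam * m) / lam := by linarith

lemma exp_two_mul_sub_one_le {ε : ℝ} (hε : 0 ≤ ε) (hε1 : ε ≤ 1) :
    Real.exp (2 * ε) - 1 ≤ 8 * ε := by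
  have hchord : Real.exp (ε * 2) ≤ (1 - ε) + ε * Real.exp 2 := by
    simpa using convexOn_exp.2 (Set.mem_univ 0) (Set.mem_univ 2) (sub_nonneg.2 hε1) hε (by ring)
  have hexp_two : Real.exp 2 ≤ 9 := by
    rw [← one_add_one_eq_two, Real.exp_add]
    nlinarith [Real.exp_one_lt_d9, Real.exp_pos 1]
  rw [mul_comm]
  linarith [mul_le_mul_of_nonneg_left hexp_two hε]

end TruncatedExponentialMoment

section Tail

variable {X Y : Type*} {n : ℕ} {ε δ Δ : ℝ} {A : (Fin n → X) → PMF Y} {μ : PMF (Fin n → X)}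
  {Q : Y → (Fin n → X) → ℝ}

lemma DiffPrivate.mul_prob_gap_ge_le (hA : DiffPrivate A ε δ)
    (hμ : HasIndepEntries μ)
    (hQ : ∀ y, HasSensitivity (Q y) Δ) (hε : 0 ≤ ε) (hΔ : 0 ≤ Δ) {lam m : ℝ} (hlam : 0 < lam)
    (hm : n * ((Real.exp (ε + lam * Δ) - 1) * Δ) ≤ m) (K : ℝ) :
    (K - m) * Real.exp (lam * K) * prob (jointPMF μ A) {ω | K ≤ gap μ (Q ω.2) ω.1} ≤
      n * (δ * (Δ * Real.exp (lam * K))) + Real.exp (lam * m) / lam := by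
  set f : (Fin n → X) × Y → ℝ := fun ω => gap μ (Q ω.2) ω.1
  have hr : 1 ≤ Real.exp ε * Real.exp (lam * Δ) := by
    rw [← Real.exp_add]
    exact Real.one_le_exp (by positivity)
  have hmoment := hA.mean_gap_mul_le hμ hQ hΔ (φ := truncExp lam K ∘ f)
    (fun _ => (Real.exp_pos _).le) (fun ω => truncExp_le hlam.le K (f ω)) (Real.exp_pos _).le
    (fun x i v y => truncExp_le_of_le_add hlam.le hΔ ((hQ y).gap_update_le μ x i v)) hr
  rw [← Real.exp_add, mul_add, ← mul_assoc (n : ℝ)] at hmoment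
  refine mul_prob_le_of_mean_mul_truncExp_le
    (memℓp_infty_of_abs_le fun ω => (hQ ω.2).abs_gap_le μ ω.1) hlam
    (hmoment.trans (add_le_add_left (mul_le_mul_of_nonneg_right hm ?_) _))
  exact mean_nonneg fun _ => (Real.exp_pos _).le

/- With `m = 8 * ε * Δ * n` and `lam = log (ε / δ) / m`, the two exponentials at the levels `m` and
`2 * m` are `ε / δ` and `(ε / δ) ^ 2`. -/
lemma DiffPrivate.prob_gap_ge_le (hA : DiffPrivate A ε δ)
    (hμ : HasIndepEntries μ)
    (hQ : ∀ y, HasSensitivity (Q y) Δ) (hε : 0 < ε) (hε1 : ε ≤ 1) (hδ : 0 < δ) (hΔ : 0 < Δ)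
    (hlog : 4 ≤ Real.log (ε / δ)) (hn : Real.log (ε / δ) / ε ^ 2 ≤ n) :
    prob (jointPMF μ A) {ω | 16 * ε * Δ * n ≤ gap μ (Q ω.2) ω.1} ≤ 3 / 8 * (δ / ε) := by
  set L := Real.log (ε / δ)
  have hn0 : (0 : ℝ) < n := lt_of_lt_of_le (by positivity) hn
  set m : ℝ := 8 * ε * Δ * n with hmdef
  have hm0 : 0 < m := by positivity
  have hlamΔ : L / m * Δ ≤ ε := by
    rw [div_le_iff₀ (by positivity)] at hn
    rw [div_mul_eq_mul_div, div_le_iff₀ hm0]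
    nlinarith [mul_le_mul_of_nonneg_right hn hΔ.le, mul_pos (mul_pos hn0 (pow_pos hε 2)) hΔ]
  have hdrift : n * ((Real.exp (ε + L / m * Δ) - 1) * Δ) ≤ m := by
    have hexp : Real.exp (ε + L / m * Δ) - 1 ≤ 8 * ε :=
      (sub_le_sub_right (Real.exp_le_exp.2 (by linarith)) 1).trans
        (exp_two_mul_sub_one_le hε.le hε1)
    calc n * ((Real.exp (ε + L / m * Δ) - 1) * Δ) ≤ n * (8 * ε * Δ) := by gcongr
      _ = m := by rw [hmdef]; ring
  have hexp_m : Real.exp (L / m * m) = ε / δ := by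
    rw [div_mul_cancel₀ L hm0.ne', Real.exp_log (by positivity)]
  have hexp_two_m : Real.exp (L / m * (2 * m)) = (ε / δ) ^ 2 := by
    rw [mul_left_comm, two_mul, Real.exp_add, hexp_m, sq]
  have htail := hA.mul_prob_gap_ge_le hμ hQ hε.le hΔ.le (by positivity) hdrift (2 * m)
  rw [hexp_m, hexp_two_m, show 2 * m - m = m by ring,
    show 2 * m = 16 * ε * Δ * n by rw [hmdef]; ring] at htail
  refine le_of_mul_le_mul_left (htail.trans ?_) (by positivity : 0 < m * (ε / δ) ^ 2)
  calc n * (δ * (Δ * (ε / δ) ^ 2)) + ε / δ / (L / m)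
      ≤ n * (δ * (Δ * (ε / δ) ^ 2)) + ε / δ / (4 / m) := by gcongr
    _ = m * (ε / δ) ^ 2 * (3 / 8 * (δ / ε)) := by
        rw [hmdef]
        field_simp
        norm_num

lemma DiffPrivate.prob_abs_gap_ge_le (hA : DiffPrivate A ε δ)
    (hμ : HasIndepEntries μ)
    (hQ : ∀ y, HasSensitivity (Q y) Δ) (hε : 0 < ε) (hε1 : ε ≤ 1) (hδ : 0 < δ) (hΔ : 0 < Δ)
    (hlog : 4 ≤ Real.log (ε / δ)) (hn : Real.log (ε / δ) / ε ^ 2 ≤ n) :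
    prob (jointPMF μ A) {ω | 16 * ε * Δ * n ≤ |gap μ (Q ω.2) ω.1|} ≤ 3 / 4 * (δ / ε) := by
  have hupper := hA.prob_gap_ge_le hμ hQ hε hε1 hδ hΔ hlog hn
  have hlower := hA.prob_gap_ge_le (Q := -Q) hμ (fun y => (hQ y).neg) hε hε1 hδ hΔ hlog hn
  simp only [Pi.neg_apply, gap_neg] at hlower
  simp only [le_abs, Set.ofPred_or]
  linarith [prob_union_le (jointPMF μ A) {ω | 16 * ε * Δ * n ≤ gap μ (Q ω.2) ω.1}
    {ω | 16 * ε * Δ * n ≤ -gap μ (Q ω.2) ω.1}]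

end Tail

lemma three_div_four_mul_div_lt_mul_sqrt {n : ℕ} {ε δ : ℝ} (hδ : 0 < δ) (hδε : δ < ε)
    (hn : Real.log (ε / δ) / ε ^ 2 ≤ n) : 3 / 4 * (δ / ε) < n * √(δ / ε) := by
  have hε := hδ.trans hδε
  have hlog : 0 < Real.log (ε / δ) := Real.log_pos ((one_lt_div hδ).2 hδε)
  have hn0 : (0 : ℝ) < n := lt_of_lt_of_le (by positivity) hn
  calc 3 / 4 * (δ / ε) < δ / ε := by linarith [div_pos hδ hε]
    _ ≤ √(δ / ε) := Real.le_sqrt_self_iff.2 ((div_lt_one hε).2 hδε).le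
    _ ≤ n * √(δ / ε) := le_mul_of_one_le_left (Real.sqrt_nonneg _)
      (Nat.one_le_cast.2 (Nat.cast_pos.1 hn0))

theorem stmt_18_general {X Y : Type*} {n : ℕ} {ε δ Δ : ℝ} {A : (Fin n → X) → PMF Y}
    {μ : PMF (Fin n → X)} {Q : Y → (Fin n → X) → ℝ} (hε : 0 < ε) (hε1 : ε ≤ 1) (hδ : 0 < δ)
    (hδε : δ ≤ Real.exp (-4) * ε) (hn : Real.log (ε / δ) / ε ^ 2 ≤ n) (hΔ : 0 < Δ)
    (hQ : ∀ x, ∀ y ∈ (A x).support, HasSensitivity (Q y) Δ) (hA : DiffPrivate A ε δ)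
    (hμ : HasIndepEntries μ) :
    prob (jointPMF μ A) {ω | 16 * ε * Δ * n ≤ |gap μ (Q ω.2) ω.1|} ≤ 3 / 4 * (δ / ε) := by
  classical
  have hlog : 4 ≤ Real.log (ε / δ) := by
    rw [Real.le_log_iff_exp_le (by positivity), le_div_iff₀ hδ, ← le_div_iff₀' (Real.exp_pos 4),
      div_eq_inv_mul, ← Real.exp_neg]
    exact hδε
  -- Queries of sensitivity above `Δ` occur with probability zero, so they may be replaced by `0`.
  set Q' : Y → (Fin n → X) → ℝ := {y | HasSensitivity (Q y) Δ}.indicator Q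
  have hQ' (y : Y) : HasSensitivity (Q' y) Δ := by
    by_cases hy : HasSensitivity (Q y) Δ
    · simp [Q', hy]
    · simp [Q', hy, HasSensitivity.zero hΔ.le]
  refine (prob_mono_of_inter_support_subset ?_).trans
    (hA.prob_abs_gap_ge_le hμ hQ' hε hε1 hδ hΔ hlog hn)
  rintro ⟨x, y⟩ ⟨hgap, hsupp⟩
  have hy : y ∈ (A x).support := by
    rw [PMF.mem_support_iff, jointPMF_apply] at hsupp
    exact right_ne_zero_of_mul hsupp
  have hQy : Q' y = Q y := Set.indicator_of_mem (hQ x y hy) Q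
  simpa only [Set.mem_ofPred_eq, hQy] using hgap

/-- **Theorem D.1.**  There exist absolute constants `C, c, c' > 0` such that:
for every `ε ∈ (0,1)`, `δ` with `0 < δ ≤ c·ε⁵`, and `n ≥ c'·log(ε/δ)/ε²`, if
`A : X^n → Y` is an `(ε,δ)`-differentially private algorithm whose outputs are `Δ`-sensitive
functions `q : X^n → ℝ`, and `X ∼ P^n`, then
`Pr_{X,A}[|q(P^n) - q(X)| ≥ C·ε·Δ·n] < n·√(δ/ε)`, where `q(P^n) = E_{X' ∼ P^n}[q(X')]`. -/
theorem stmt_18 : ∃ C c c' : ℝ, 0 < C ∧ 0 < c ∧ 0 < c' ∧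
    ∀ (X : Type) [Countable X] (n : ℕ) (ε δ Δ : ℝ)
      (A : (Fin n → X) → PMF ((Fin n → X) → ℝ)),
      0 < ε → ε < 1 → 0 < δ → δ ≤ c * ε ^ 5 → c' * Real.log (ε / δ) / ε ^ 2 ≤ (n : ℝ) →
      0 < Δ →
      (∀ (x : Fin n → X) (q : (Fin n → X) → ℝ), q ∈ (A x).support →
        ∀ (i : Fin n) (y : Fin n → X) (v : X),
          |q y - q (Function.update y i v)| ≤ Δ) →
      DiffPrivate A ε δ →
      ∀ P : PMF X,
        prob (jointPMF (iidPMF P n) A)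
            {p | C * ε * Δ * n ≤
                   |(∑' x : Fin n → X, ((iidPMF P n) x).toReal * p.2 x) - p.2 p.1|} <
          (n : ℝ) * Real.sqrt (δ / ε) := by
  refine ⟨16, Real.exp (-4), 1, by norm_num, Real.exp_pos _, one_pos, ?_⟩
  intro X _ n ε δ Δ A hε hε1 hδ hδε hn hΔ hsens hA P
  rw [one_mul] at hn
  have hδε' : δ ≤ Real.exp (-4) * ε := hδε.trans
    (mul_le_mul_of_nonneg_left (pow_le_of_le_one hε.le hε1.le (by norm_num)) (Real.exp_pos _).le)
  have hδε_lt : δ < ε :=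
    hδε'.trans_lt (mul_lt_of_lt_one_left hε (by simp))
  exact (stmt_18_general (Q := id) hε hε1.le hδ hδε' hn hΔ hsens hA
    (hasIndepEntries_iidPMF P n)).trans_lt (three_div_four_mul_div_lt_mul_sqrt hδ hδε_lt hn)
end
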